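/- Let (X, 𝒜, μ) be a σ-finite measure space and let (A_n)_{n∈ℕ} be an increasing sequence of measurable sets of finite measure with X = ∪_{n=1}^∞ A_n. Let 𝒮 denote the subspace of L¹(X,μ) consisting of integrable simple functions, and let D : 𝒮 → L¹(X,μ) be a linear map. Then D admits a (necessarily unique) extension to a doubly stochastic operator on L¹(X,μ) if and only if D is nonnegative (Dφ ≥ 0 a.e. whenever φ ≥ 0 a.e.) and for every measurable set E with μ(E) < ∞ one has (E1) ∫_X D(χ_E) dμ = μ(E) and (E2) lim_{n→∞} ∫_X χ_E · D(χ_{A_n}) dμ = μ(E). -/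

import Mathlib

open MeasureTheory Filter Topology

attribute [local instance] MeasureTheory.Lp.simpleFunc.smul
  MeasureTheory.Lp.simpleFunc.module

/-!
The adjoint of an operator on `L¹` lives on `L^∞`, so one needs `L^∞` to be the dual of `L¹`. Given
a functional `Φ` on `L¹` and a strictly positive `w ∈ L²`, the functional `u ↦ Φ (w u)` on `L²` is
represented by some `v`; then `|v| ≤ ‖Φ‖ w`, and `v / w ∈ L^∞` represents `Φ`.

A positive `D` with `∫ D χ_E = μ(E)` preserves integrals of simple functions, hence is an
`L¹`-contraction and extends to a Markov operator `T`. Since `∫_{Aₙ} T* χ_E = ∫_E T χ_{Aₙ}`, the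
limit condition says exactly that `∫ T* χ_E = μ(E)`. This makes `T` semi-doubly stochastic, so
`0 ≤ T χ_{Aₙ} ≤ 1`, and by this uniform bound the convergence `∫ (T χ_{Aₙ}) g → ∫ g` passes from
indicators to all `g ∈ L¹ ∩ L^∞`.
-/

open scoped ENNReal InnerProductSpace

section Operators

variable {X Y ι : Type*} [MeasurableSpace X] [MeasurableSpace Y]
  {μ : Measure X} {ν : Measure Y} {p : ℝ≥0∞}

section Indicator

theorem indicatorConstLp_eq_smul_one {s : Set X} (hs : MeasurableSet s) (hμs : μ s ≠ ⊤) (c : ℝ) :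
    indicatorConstLp p hs hμs c = c • indicatorConstLp p hs hμs (1 : ℝ) := by
  apply Lp.ext
  filter_upwards [indicatorConstLp_coeFn (p := p) (hs := hs) (hμs := hμs) (c := c),
    indicatorConstLp_coeFn (p := p) (hs := hs) (hμs := hμs) (c := (1 : ℝ)),
    Lp.coeFn_smul c (indicatorConstLp p hs hμs (1 : ℝ))] with x hc h1 hsmul
  rw [hc, hsmul, Pi.smul_apply, h1, ← Set.indicator_const_smul_apply, smul_eq_mul, mul_one]

theorem indicatorConstLp_one_nonneg {s : Set X} (hs : MeasurableSet s) (hμs : μ s ≠ ⊤) :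
    0 ≤ indicatorConstLp p hs hμs (1 : ℝ) := by
  rw [← Lp.coeFn_nonneg]
  filter_upwards [indicatorConstLp_coeFn (p := p) (hs := hs) (hμs := hμs) (c := (1 : ℝ))] with x hx
  rw [hx]
  exact Set.indicator_nonneg (fun _ _ => zero_le_one) x

theorem tendsto_apply_of_tendsto_apply_indicatorConstLp [Fact (1 ≤ p)] (hp : p ≠ ⊤)
    {G : Type*} [NormedAddCommGroup G] [NormedSpace ℝ G] {l : Filter ι}
    {F : ι → Lp ℝ p μ →L[ℝ] G} {F₀ : Lp ℝ p μ →L[ℝ] G} {C : ℝ} (hF : ∀ i, ‖F i‖ ≤ C)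
    (hind : ∀ (s : Set X) (hs : MeasurableSet s) (hμs : μ s ≠ ⊤),
      Tendsto (fun i => F i (indicatorConstLp p hs hμs (1 : ℝ))) l
        (𝓝 (F₀ (indicatorConstLp p hs hμs (1 : ℝ)))))
    (f : Lp ℝ p μ) : Tendsto (fun i => F i f) l (𝓝 (F₀ f)) := by
  induction f using Lp.induction hp with
  | indicatorConst c hs hμs =>
    rw [Lp.simpleFunc.coe_indicatorConst, indicatorConstLp_eq_smul_one hs hμs.ne]
    simpa only [map_smul] using (hind _ hs hμs.ne).const_smul c
  | add hf hg _ hf_lim hg_lim => simpa only [map_add] using hf_lim.add hg_lim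
  | isClosed =>
    have hbdd : ∃ C, ∀ i, ‖F i‖ ≤ C := ⟨C, hF⟩
    have hequi : Equicontinuous ((↑) ∘ F : ι → Lp ℝ p μ → G) :=
      ((NormedSpace.equicontinuous_TFAE F).out 1 5).2 hbdd
    exact hequi.isClosed_setOfPred_tendsto F₀.continuous

end Indicator

section L1

theorem integral_L1_eq_integralCLM (f : Lp ℝ 1 μ) : ∫ x, f x ∂μ = L1.integralCLM f := by
  rw [← L1.integral_eq, L1.integral_eq_integral]

theorem norm_L1_eq_integral_of_nonneg {f : Lp ℝ 1 μ} (hf : 0 ≤ f) : ‖f‖ = ∫ x, f x ∂μ := by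
  rw [L1.norm_eq_integral_norm]
  exact integral_congr_ae (((Lp.coeFn_nonneg f).2 hf).mono fun x hx => Real.norm_of_nonneg hx)

theorem ae_abs_le_of_forall_abs_setIntegral_le [SigmaFinite μ] {f g : X → ℝ}
    (hf : ∀ s, MeasurableSet s → μ s < ⊤ → IntegrableOn f s μ)
    (hg : ∀ s, MeasurableSet s → μ s < ⊤ → IntegrableOn g s μ)
    (hle : ∀ s, MeasurableSet s → μ s < ⊤ → |∫ x in s, f x ∂μ| ≤ ∫ x in s, g x ∂μ) :
    ∀ᵐ x ∂μ, |f x| ≤ g x := by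
  have hsub : 0 ≤ᵐ[μ] fun x => g x - f x := by
    refine ae_nonneg_of_forall_setIntegral_nonneg_of_sigmaFinite
      (fun s hs hμs => (hg s hs hμs).sub (hf s hs hμs)) fun s hs hμs => ?_
    rw [integral_sub (hg s hs hμs) (hf s hs hμs)]
    exact sub_nonneg.2 (abs_le.1 (hle s hs hμs)).2
  have hadd : 0 ≤ᵐ[μ] fun x => g x + f x := by
    refine ae_nonneg_of_forall_setIntegral_nonneg_of_sigmaFinite
      (fun s hs hμs => (hg s hs hμs).add (hf s hs hμs)) fun s hs hμs => ?_
    rw [integral_add (hg s hs hμs) (hf s hs hμs)]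
    linarith [(abs_le.1 (hle s hs hμs)).1]
  filter_upwards [hsub, hadd] with x hx_sub hx_add
  simp only [Pi.zero_apply] at hx_sub hx_add
  exact abs_le.2 ⟨by linarith, by linarith⟩

theorem ae_le_const_of_forall_setIntegral_le {f : X → ℝ} {c : ℝ} (hc : 0 < c)
    (hf : Integrable f μ)
    (hle : ∀ s, MeasurableSet s → μ s < ⊤ → ∫ x in s, f x ∂μ ≤ c * μ.real s) :
    ∀ᵐ x ∂μ, f x ≤ c := by
  set t := toMeasurable μ {x | c ≤ f x}
  have ht : MeasurableSet t := measurableSet_toMeasurable _ _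
  have hμt : μ t < ⊤ := (measure_toMeasurable _).trans_lt (hf.measure_ge_lt_top hc)
  have : IsFiniteMeasure (μ.restrict t) := ⟨by simpa using hμt⟩
  have hft : ∀ᵐ x ∂μ.restrict t, f x ≤ c := by
    refine ae_le_of_forall_setIntegral_le hf.restrict (integrable_const c) fun s hs _ => ?_
    rw [Measure.restrict_restrict hs, setIntegral_const, smul_eq_mul, mul_comm]
    exact hle _ (hs.inter ht) ((measure_mono Set.inter_subset_right).trans_lt hμt)
  filter_upwards [(ae_restrict_iff' ht).1 hft] with x hx
  by_contra! hlt
  exact hlt.not_ge (hx (subset_toMeasurable _ _ hlt.le))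

theorem exists_pos_memLp [SigmaFinite μ] (p : ℝ≥0∞) :
    ∃ w : X → ℝ, (∀ x, 0 < w x) ∧ MemLp w p μ := by
  obtain ⟨g, hg_pos, hg_meas, hg_lt⟩ := exists_pos_lintegral_lt_of_sigmaFinite μ one_ne_zero
  have hg_mem : MemLp (fun x => (g x : ℝ)) 1 μ := by
    refine memLp_one_iff_integrable.2 ⟨hg_meas.coe_nnreal_real.aestronglyMeasurable, ?_⟩
    simpa [hasFiniteIntegral_iff_enorm, enorm_eq_nnnorm] using hg_lt.trans ENNReal.one_lt_top
  refine ⟨fun x => ‖(g x : ℝ)‖ ^ (p⁻¹).toReal, fun x => ?_, ?_⟩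
  · exact Real.rpow_pos_of_pos (norm_pos_iff.2 (NNReal.coe_ne_zero.2 (hg_pos x).ne')) _
  · simpa using hg_mem.norm_rpow_div p⁻¹

theorem tendsto_toLp_indicator_of_aecover {E : Type*} [NormedAddCommGroup E]
    {l : Filter ι} [l.IsCountablyGenerated] {S : ι → Set X} (hS : AECover μ l S) {f : X → E}
    (hf : MemLp f 1 μ) :
    Tendsto (fun i => (hf.indicator (hS.measurableSet i)).toLp _) l (𝓝 (hf.toLp f)) := by
  refine (Lp.tendsto_Lp_iff_tendsto_eLpNorm'' _ _ _ _).2 ?_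
  simp only [eLpNorm_one_eq_lintegral_enorm]
  rw [← lintegral_zero (μ := μ)]
  refine tendsto_lintegral_filter_of_dominated_convergence' (fun x => ‖f x‖ₑ)
    (.of_forall fun i => ?_) (.of_forall fun i => .of_forall fun x => ?_)
    (hasFiniteIntegral_iff_enorm.1 (memLp_one_iff_integrable.1 hf).2).ne ?_
  · exact ((hf.indicator (hS.measurableSet i)).sub hf).1.enorm
  · by_cases hx : x ∈ S i <;> simp [hx]
  · filter_upwards [hS.ae_tendsto_indicator f] with x hx
    simpa using (hx.sub_const (f x)).enorm

/-- Multiplication by a fixed function `w ∈ L²`, as a bounded operator `L² → L¹`.  For `w > 0` it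
transports a functional on `L¹` to the Hilbert space `L²`. -/
noncomputable def l2MulToL1 (w : Lp ℝ 2 μ) : Lp ℝ 2 μ →L[ℝ] Lp ℝ 1 μ :=
  (ContinuousLinearMap.mul ℝ ℝ).holderL μ 2 2 1 w

theorem coeFn_l2MulToL1 (w u : Lp ℝ 2 μ) : l2MulToL1 w u =ᵐ[μ] fun x => w x * u x :=
  (ContinuousLinearMap.mul ℝ ℝ).coeFn_holder (r := 1) w u

theorem norm_l2MulToL1_indicatorConstLp {w : Lp ℝ 2 μ} (hw : 0 ≤ w) {s : Set X}
    (hs : MeasurableSet s) (hμs : μ s ≠ ⊤) :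
    ‖l2MulToL1 w (indicatorConstLp 2 hs hμs (1 : ℝ))‖ = ∫ x in s, w x ∂μ := by
  rw [L1.norm_eq_integral_norm, ← integral_indicator hs]
  refine integral_congr_ae ?_
  filter_upwards [(Lp.coeFn_nonneg w).2 hw,
    coeFn_l2MulToL1 w (indicatorConstLp 2 hs hμs (1 : ℝ)),
    indicatorConstLp_coeFn (p := 2) (hs := hs) (hμs := hμs) (c := (1 : ℝ))] with x hwx hM h1
  rw [hM, h1]
  by_cases hx : x ∈ s <;> simp [hx, abs_of_nonneg hwx]

theorem denseRange_l2MulToL1 {w : Lp ℝ 2 μ} (hw : ∀ᵐ x ∂μ, w x ≠ 0) :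
    DenseRange (l2MulToL1 w) := by
  intro f
  -- On `S n` the quotient `f / w` is bounded by `n * w`, hence square integrable.
  set S : ℕ → Set X := fun n => {x | |f x| ≤ n * w x ^ 2}
  have hw_meas : Measurable w := (Lp.stronglyMeasurable w).measurable
  have hf_meas : Measurable f := (Lp.stronglyMeasurable f).measurable
  have hS_meas (n : ℕ) : MeasurableSet (S n) :=
    measurableSet_le hf_meas.abs ((hw_meas.pow_const 2).const_mul _)
  have hS : AECover μ atTop S := by
    refine ⟨hw.mono fun x hx => ?_, hS_meas⟩
    have hlim : Tendsto (fun n : ℕ => n * w x ^ 2) atTop atTop :=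
      tendsto_natCast_atTop_atTop.atTop_mul_const (by positivity)
    exact hlim.eventually_ge_atTop _
  have hu (n : ℕ) : MemLp ((S n).indicator fun x => f x / w x) 2 μ := by
    refine ((Lp.memLp w).const_mul (n : ℝ)).mono
      ((hf_meas.div hw_meas).indicator (hS_meas n)).aestronglyMeasurable (hw.mono fun x hx => ?_)
    by_cases hxS : x ∈ S n
    · rw [Set.indicator_of_mem hxS, Real.norm_eq_abs, Real.norm_eq_abs, abs_div, abs_mul,
        Nat.abs_cast, div_le_iff₀ (abs_pos.2 hx), mul_assoc, abs_mul_abs_self, ← sq]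
      exact hxS
    · simp only [Set.indicator_of_notMem hxS, norm_zero, norm_nonneg]
  have hrange (n : ℕ) : l2MulToL1 w ((hu n).toLp _)
      = ((Lp.memLp f).indicator (hS_meas n)).toLp _ := by
    apply Lp.ext
    filter_upwards [hw, (hu n).coeFn_toLp, ((Lp.memLp f).indicator (hS_meas n)).coeFn_toLp,
      coeFn_l2MulToL1 w ((hu n).toLp _)] with x hx hux hfx hM
    rw [hM, hfx, hux]
    by_cases hxS : x ∈ S n <;> simp [hxS, mul_div_cancel₀, hx]
  have hlim := tendsto_toLp_indicator_of_aecover hS (Lp.memLp f)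
  rw [Lp.toLp_coeFn] at hlim
  exact mem_closure_of_tendsto hlim (.of_forall fun n => ⟨_, hrange n⟩)

end L1

section Duality

/-- The duality pairing `(f, g) ↦ ∫ f g` between `L¹` and `L^∞`, as a bounded bilinear map. -/
noncomputable def l1LinftyPairing (μ : Measure X) : Lp ℝ 1 μ →L[ℝ] Lp ℝ ⊤ μ →L[ℝ] ℝ :=
  (ContinuousLinearMap.mul ℝ ℝ).lpPairing μ 1 ⊤

theorem l1LinftyPairing_apply (f : Lp ℝ 1 μ) (g : Lp ℝ ⊤ μ) :
    l1LinftyPairing μ f g = ∫ x, f x * g x ∂μ :=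
  (ContinuousLinearMap.mul ℝ ℝ).lpPairing_eq_integral f g

theorem l1LinftyPairing_indicatorConstLp_left {s : Set X} (hs : MeasurableSet s) (hμs : μ s ≠ ⊤)
    (g : Lp ℝ ⊤ μ) :
    l1LinftyPairing μ (indicatorConstLp 1 hs hμs (1 : ℝ)) g = ∫ x in s, g x ∂μ := by
  rw [l1LinftyPairing_apply, ← integral_indicator hs]
  refine integral_congr_ae ?_
  filter_upwards [indicatorConstLp_coeFn (p := 1) (hs := hs) (hμs := hμs) (c := (1 : ℝ))] with x hx
  simp only [hx, ← Set.indicator_mul_left, one_mul]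

theorem l1LinftyPairing_indicatorConstLp_right (f : Lp ℝ 1 μ) {s : Set X} (hs : MeasurableSet s)
    (hμs : μ s ≠ ⊤) :
    l1LinftyPairing μ f (indicatorConstLp ⊤ hs hμs (1 : ℝ)) = ∫ x in s, f x ∂μ := by
  rw [l1LinftyPairing_apply, ← integral_indicator hs]
  refine integral_congr_ae ?_
  filter_upwards [indicatorConstLp_coeFn (p := ⊤) (hs := hs) (hμs := hμs) (c := (1 : ℝ))] with x hx
  simp only [hx, ← Set.indicator_mul_right, mul_one]

theorem l1LinftyPairing_nonneg {f : Lp ℝ 1 μ} {g : Lp ℝ ⊤ μ} (hf : 0 ≤ f) (hg : 0 ≤ g) :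
    0 ≤ l1LinftyPairing μ f g := by
  rw [l1LinftyPairing_apply]
  refine integral_nonneg_of_ae ?_
  filter_upwards [(Lp.coeFn_nonneg f).2 hf, (Lp.coeFn_nonneg g).2 hg] with x hfx hgx
  exact mul_nonneg hfx hgx

theorem nonneg_of_forall_l1LinftyPairing_nonneg [SigmaFinite μ] {g : Lp ℝ ⊤ μ}
    (hg : ∀ f : Lp ℝ 1 μ, 0 ≤ f → 0 ≤ l1LinftyPairing μ f g) : 0 ≤ g := by
  rw [← Lp.coeFn_nonneg]
  refine ae_nonneg_of_forall_setIntegral_nonneg_of_sigmaFinite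
    (fun s _ hμs => integrableOn_Lp_of_measure_ne_top g le_top hμs.ne) fun s hs hμs => ?_
  rw [← l1LinftyPairing_indicatorConstLp_left hs hμs.ne]
  exact hg _ (indicatorConstLp_one_nonneg hs hμs.ne)

theorem l1LinftyPairing_flip_injective [SigmaFinite μ] :
    Function.Injective (l1LinftyPairing μ).flip := by
  refine (injective_iff_map_eq_zero _).2 fun g hg => le_antisymm ?_ ?_
  · rw [← neg_nonneg]
    refine nonneg_of_forall_l1LinftyPairing_nonneg fun f _ => ?_
    rw [map_neg, ← ContinuousLinearMap.flip_apply, hg, zero_apply, neg_zero]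
  · refine nonneg_of_forall_l1LinftyPairing_nonneg fun f _ => ?_
    rw [← ContinuousLinearMap.flip_apply, hg, zero_apply]

theorem ae_abs_toDual_symm_l2MulToL1_le [SigmaFinite μ] (Φ : StrongDual ℝ (Lp ℝ 1 μ))
    {w : Lp ℝ 2 μ} (hw : 0 ≤ w) :
    ∀ᵐ x ∂μ, |(InnerProductSpace.toDual ℝ (Lp ℝ 2 μ)).symm
      (Φ ∘L l2MulToL1 w) x| ≤ ‖Φ‖ * w x := by
  have hint (f : Lp ℝ 2 μ) (s : Set X) (hμs : μ s < ⊤) : IntegrableOn f s μ :=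
    integrableOn_Lp_of_measure_ne_top f one_le_two hμs.ne
  refine ae_abs_le_of_forall_abs_setIntegral_le (fun s _ => hint _ s)
    (fun s _ hμs => (hint w s hμs).const_mul _) fun s hs hμs => ?_
  rw [← L2.inner_indicatorConstLp_one (𝕜 := ℝ) hs hμs.ne, real_inner_comm,
    InnerProductSpace.toDual_symm_apply, integral_const_mul,
    ← norm_l2MulToL1_indicatorConstLp hw hs hμs.ne]
  exact Φ.le_opNorm _

theorem l1LinftyPairing_flip_surjective [SigmaFinite μ] :
    Function.Surjective (l1LinftyPairing μ).flip := by
  intro Φ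
  obtain ⟨w₀, hw₀_pos, hw₀⟩ := exists_pos_memLp (μ := μ) 2
  set w : Lp ℝ 2 μ := hw₀.toLp w₀
  have hw_pos : ∀ᵐ x ∂μ, 0 < w x := hw₀.coeFn_toLp.mono fun x hx => hx ▸ hw₀_pos x
  have hw : 0 ≤ w := (Lp.coeFn_nonneg w).1 (hw_pos.mono fun _ => le_of_lt)
  set v : Lp ℝ 2 μ := (InnerProductSpace.toDual ℝ (Lp ℝ 2 μ)).symm (Φ ∘L l2MulToL1 w) with hv
  have hquot_meas : AEStronglyMeasurable (fun x => v x / w x) μ :=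
    ((Lp.stronglyMeasurable v).measurable.div
      (Lp.stronglyMeasurable w).measurable).aestronglyMeasurable
  have hquot : MemLp (fun x => v x / w x) ⊤ μ := by
    refine memLp_top_of_bound hquot_meas ‖Φ‖ ?_
    filter_upwards [hw_pos, ae_abs_toDual_symm_l2MulToL1_le Φ hw] with x hx hvx
    rwa [Real.norm_eq_abs, abs_div, abs_of_pos hx, div_le_iff₀ hx]
  refine ⟨hquot.toLp _, ContinuousLinearMap.ext fun f => ?_⟩
  refine (denseRange_l2MulToL1 (hw_pos.mono fun _ => ne_of_gt)).induction_on f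
    (isClosed_eq (by fun_prop) (by fun_prop)) fun u => ?_
  calc (l1LinftyPairing μ).flip (hquot.toLp _) (l2MulToL1 w u) = ⟪v, u⟫_ℝ := by
        rw [ContinuousLinearMap.flip_apply, l1LinftyPairing_apply, L2.inner_def]
        refine integral_congr_ae ?_
        filter_upwards [hw_pos, hquot.coeFn_toLp, coeFn_l2MulToL1 w u] with x hx hquotx hMx
        rw [hMx, hquotx, RCLike.inner_apply, conj_trivial]
        field_simp
    _ = Φ (l2MulToL1 w u) := by rw [hv, InnerProductSpace.toDual_symm_apply]; rfl

/-- The identification of `L^∞` with the dual of `L¹`, through the pairing `∫ f g`. -/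
noncomputable def linftyEquivDual (μ : Measure X) [SigmaFinite μ] :
    Lp ℝ ⊤ μ ≃L[ℝ] StrongDual ℝ (Lp ℝ 1 μ) :=
  .ofBijective (l1LinftyPairing μ).flip (LinearMap.ker_eq_bot.2 l1LinftyPairing_flip_injective)
    (LinearMap.range_eq_top.2 l1LinftyPairing_flip_surjective)

end Duality

theorem abs_map_le_of_le_of_neg_le {E F 𝓕 : Type*} [AddCommGroup E] [PartialOrder E]
    [IsOrderedAddMonoid E] [AddCommGroup F] [Lattice F] [IsOrderedAddMonoid F] [FunLike 𝓕 E F]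
    [AddMonoidHomClass 𝓕 E F] {T : 𝓕} (hT : ∀ f, 0 ≤ f → 0 ≤ T f) {f g : E} (hle : f ≤ g)
    (hneg : -f ≤ g) : |T f| ≤ T g := by
  have hmono {u : E} (hu : u ≤ g) : T u ≤ T g := by
    rw [← sub_nonneg, ← map_sub]
    exact hT _ (sub_nonneg.2 hu)
  exact abs_le'.2 ⟨hmono hle, map_neg T f ▸ hmono hneg⟩

section Adjoint

variable [SigmaFinite μ]

/-- The adjoint `L^∞ → L^∞` of a bounded operator on `L¹`, under the identification of `L^∞` with
the dual of `L¹`. -/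
noncomputable def linftyAdjoint (T : Lp ℝ 1 μ →L[ℝ] Lp ℝ 1 ν) : Lp ℝ ⊤ ν →L[ℝ] Lp ℝ ⊤ μ :=
  (linftyEquivDual μ).symm ∘L ContinuousLinearMap.precomp ℝ T ∘L (l1LinftyPairing ν).flip

variable {T : Lp ℝ 1 μ →L[ℝ] Lp ℝ 1 ν}

theorem l1LinftyPairing_linftyAdjoint (f : Lp ℝ 1 μ) (g : Lp ℝ ⊤ ν) :
    l1LinftyPairing μ f (linftyAdjoint T g) = l1LinftyPairing ν (T f) g :=
  DFunLike.congr_fun ((linftyEquivDual μ).apply_symm_apply _) f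

theorem eq_linftyAdjoint_iff {T' : Lp ℝ ⊤ ν →L[ℝ] Lp ℝ ⊤ μ} :
    T' = linftyAdjoint T ↔
      ∀ f g, l1LinftyPairing ν (T f) g = l1LinftyPairing μ f (T' g) := by
  refine ⟨fun h f g => by rw [h, l1LinftyPairing_linftyAdjoint], fun h => ?_⟩
  ext1 g
  refine l1LinftyPairing_flip_injective (ContinuousLinearMap.ext fun f => ?_)
  rw [ContinuousLinearMap.flip_apply, ContinuousLinearMap.flip_apply, ← h,
    l1LinftyPairing_linftyAdjoint]

theorem setIntegral_linftyAdjoint {s : Set X} (hs : MeasurableSet s) (hμs : μ s ≠ ⊤)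
    (g : Lp ℝ ⊤ ν) :
    ∫ x in s, linftyAdjoint T g x ∂μ
      = l1LinftyPairing ν (T (indicatorConstLp 1 hs hμs (1 : ℝ))) g := by
  rw [← l1LinftyPairing_indicatorConstLp_left hs hμs, l1LinftyPairing_linftyAdjoint]

theorem setIntegral_linftyAdjoint_indicatorConstLp {s : Set X} (hs : MeasurableSet s)
    (hμs : μ s ≠ ⊤) {t : Set Y} (ht : MeasurableSet t) (hνt : ν t ≠ ⊤) :
    ∫ x in s, linftyAdjoint T (indicatorConstLp ⊤ ht hνt (1 : ℝ)) x ∂μ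
      = ∫ y in t, T (indicatorConstLp 1 hs hμs (1 : ℝ)) y ∂ν := by
  rw [setIntegral_linftyAdjoint, l1LinftyPairing_indicatorConstLp_right]

theorem linftyAdjoint_nonneg (hT : ∀ f, 0 ≤ f → 0 ≤ T f) (g : Lp ℝ ⊤ ν) (hg : 0 ≤ g) :
    0 ≤ linftyAdjoint T g :=
  nonneg_of_forall_l1LinftyPairing_nonneg fun f hf => by
    rw [l1LinftyPairing_linftyAdjoint]
    exact l1LinftyPairing_nonneg (hT f hf) hg

theorem ae_abs_linftyAdjoint_le (hT : ∀ f, 0 ≤ f → 0 ≤ T f) (g : Lp ℝ ⊤ ν) :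
    ∀ᵐ x ∂μ, |linftyAdjoint T g x| ≤ linftyAdjoint T |g| x := by
  have hle : |linftyAdjoint T g| ≤ linftyAdjoint T |g| :=
    abs_map_le_of_le_of_neg_le (linftyAdjoint_nonneg hT) (le_abs_self g) (neg_le_abs g)
  filter_upwards [(Lp.coeFn_le _ _).2 hle, Lp.coeFn_abs (linftyAdjoint T g)] with x hx habs
  exact habs ▸ hx

end Adjoint

/-- A Markov operator: a positive bounded operator between `L¹` spaces that preserves the
integral. -/
structure IsMarkovOperator (T : Lp ℝ 1 μ →L[ℝ] Lp ℝ 1 ν) : Prop where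
  nonneg : ∀ f, 0 ≤ f → 0 ≤ T f
  integral_eq : ∀ f, ∫ y, T f y ∂ν = ∫ x, f x ∂μ

/-- A semi-doubly stochastic operator: a Markov operator `T` with `∫_E T χ_B ≤ ν(E)` for all sets
`B` and `E` of finite measure. -/
structure IsSemiDoublyStochastic (T : Lp ℝ 1 μ →L[ℝ] Lp ℝ 1 ν) : Prop
    extends IsMarkovOperator T where
  setIntegral_indicatorConstLp_le : ∀ {E : Set Y} {B : Set X}, MeasurableSet E → ν E < ⊤ →
    ∀ (hB : MeasurableSet B) (hμB : μ B < ⊤),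
      ∫ y in E, T (indicatorConstLp 1 hB hμB.ne (1 : ℝ)) y ∂ν ≤ ν.real E

/-- A doubly stochastic operator: a semi-doubly stochastic operator whose adjoint maps `L¹ ∩ L^∞`
to `L¹` and preserves the integral there.  Integrability is required separately because the
integral of a non-integrable function is `0`. -/
structure IsDoublyStochastic [SigmaFinite μ] (T : Lp ℝ 1 μ →L[ℝ] Lp ℝ 1 ν) : Prop
    extends IsSemiDoublyStochastic T where
  integrable_linftyAdjoint : ∀ {g : Lp ℝ ⊤ ν}, Integrable g ν → Integrable (linftyAdjoint T g) μ
  integral_linftyAdjoint : ∀ {g : Lp ℝ ⊤ ν}, Integrable g ν →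
    ∫ x, linftyAdjoint T g x ∂μ = ∫ y, g y ∂ν

theorem isDoublyStochastic_iff [SigmaFinite μ] {T : Lp ℝ 1 μ →L[ℝ] Lp ℝ 1 ν} :
    IsDoublyStochastic T ↔
      (∀ f : Lp ℝ 1 μ, 0 ≤ᵐ[μ] f → 0 ≤ᵐ[ν] T f) ∧
      (∀ f, ∫ y, T f y ∂ν = ∫ x, f x ∂μ) ∧
      (∀ (E : Set Y) (B : Set X) (_ : MeasurableSet E) (_ : ν E < ⊤) (hB : MeasurableSet B)
        (hμB : μ B < ⊤),
        ∫ y in E, T (indicatorConstLp 1 hB hμB.ne (1 : ℝ)) y ∂ν ≤ (ν E).toReal) ∧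
      ∃ T' : Lp ℝ ⊤ ν →L[ℝ] Lp ℝ ⊤ μ,
        (∀ f g, ∫ y, T f y * g y ∂ν = ∫ x, f x * T' g x ∂μ) ∧
        ∀ g : Lp ℝ ⊤ ν, Integrable g ν →
          Integrable (T' g) μ ∧ ∫ x, T' g x ∂μ = ∫ y, g y ∂ν := by
  simp only [← l1LinftyPairing_apply, ← eq_linftyAdjoint_iff, exists_eq_left, Lp.coeFn_nonneg]
  exact ⟨fun hT => ⟨hT.nonneg, hT.integral_eq,
      fun _ _ hE hνE => hT.setIntegral_indicatorConstLp_le hE hνE,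
      fun _ hg => ⟨hT.integrable_linftyAdjoint hg, hT.integral_linftyAdjoint hg⟩⟩,
    fun ⟨hnonneg, hint, hle, hadj⟩ => ⟨⟨⟨hnonneg, hint⟩, hle _ _⟩,
      fun hg => (hadj _ hg).1, fun hg => (hadj _ hg).2⟩⟩

theorem IsSemiDoublyStochastic.ae_norm_le_one {T : Lp ℝ 1 μ →L[ℝ] Lp ℝ 1 ν}
    (hT : IsSemiDoublyStochastic T) {B : Set X} (hB : MeasurableSet B) (hμB : μ B < ⊤) :
    ∀ᵐ y ∂ν, ‖T (indicatorConstLp 1 hB hμB.ne (1 : ℝ)) y‖ ≤ 1 := by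
  have hle_one : ∀ᵐ y ∂ν, T (indicatorConstLp 1 hB hμB.ne (1 : ℝ)) y ≤ 1 :=
    ae_le_const_of_forall_setIntegral_le one_pos (L1.integrable_coeFn _) fun E hE hνE => by
      simpa only [one_mul] using hT.setIntegral_indicatorConstLp_le hE hνE hB hμB
  have hnonneg := (Lp.coeFn_nonneg _).2 (hT.nonneg _ (indicatorConstLp_one_nonneg hB hμB.ne))
  filter_upwards [hle_one, hnonneg] with y hy_le hy_nonneg
  rwa [Real.norm_of_nonneg hy_nonneg]

section Cover

variable {l : Filter ι}

theorem aecover_atTop_of_monotone [Preorder ι] {A : ι → Set X}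
    (hAmeas : ∀ i, MeasurableSet (A i)) (hAmono : Monotone A) (hAcover : ⋃ i, A i = Set.univ) :
    AECover μ atTop A where
  ae_eventually_mem := .of_forall fun x => by
    obtain ⟨i, hi⟩ := Set.iUnion_eq_univ_iff.1 hAcover x
    exact (eventually_ge_atTop i).mono fun j hij => hAmono hij hi
  measurableSet := hAmeas

theorem tendsto_l1LinftyPairing_of_norm_le_one {u : ι → Lp ℝ ⊤ ν} (hu : ∀ i, ‖u i‖ ≤ 1)
    (hlim : ∀ E, MeasurableSet E → ν E < ⊤ →
      Tendsto (fun i => ∫ y in E, u i y ∂ν) l (𝓝 (ν.real E)))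
    (f : Lp ℝ 1 ν) :
    Tendsto (fun i => l1LinftyPairing ν f (u i)) l (𝓝 (∫ y, f y ∂ν)) := by
  have hbdd (i : ι) : ‖(l1LinftyPairing ν).flip (u i)‖ ≤ ‖(l1LinftyPairing ν).flip‖ :=
    (l1LinftyPairing ν).flip.unit_le_opNorm _ (hu i)
  rw [integral_L1_eq_integralCLM]
  refine tendsto_apply_of_tendsto_apply_indicatorConstLp ENNReal.one_ne_top hbdd
    (fun s hs hνs => ?_) f
  rw [← integral_L1_eq_integralCLM, integral_indicatorConstLp, smul_eq_mul, mul_one]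
  simpa only [ContinuousLinearMap.flip_apply, l1LinftyPairing_indicatorConstLp_left]
    using hlim s hs hνs.lt_top

theorem tendsto_l1LinftyPairing_of_ae_norm_le_one {u : ι → Lp ℝ 1 ν}
    (hu : ∀ i, ∀ᵐ y ∂ν, ‖u i y‖ ≤ 1)
    (hlim : ∀ E, MeasurableSet E → ν E < ⊤ →
      Tendsto (fun i => ∫ y in E, u i y ∂ν) l (𝓝 (ν.real E)))
    {g : Lp ℝ ⊤ ν} (hg : Integrable g ν) :
    Tendsto (fun i => l1LinftyPairing ν (u i) g) l (𝓝 (∫ y, g y ∂ν)) := by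
  have hu_mem (i : ι) : MemLp (u i) ⊤ ν :=
    memLp_top_of_bound (Lp.aestronglyMeasurable (u i)) 1 (hu i)
  have hu_norm (i : ι) : ‖(hu_mem i).toLp‖ ≤ 1 := by
    rw [Lp.norm_toLp, eLpNorm_exponent_top]
    exact ENNReal.toReal_le_of_le_ofReal zero_le_one (eLpNormEssSup_le_of_ae_bound (hu i))
  have hpair (i : ι) : l1LinftyPairing ν hg.toL1 (hu_mem i).toLp = l1LinftyPairing ν (u i) g := by
    rw [l1LinftyPairing_apply, l1LinftyPairing_apply]
    refine integral_congr_ae ?_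
    filter_upwards [hg.coeFn_toL1, (hu_mem i).coeFn_toLp] with y hgy huy
    rw [hgy, huy, mul_comm]
  have htoLp := tendsto_l1LinftyPairing_of_norm_le_one (l := l) hu_norm (fun E hE hνE => by
    simpa only [setIntegral_congr_ae hE ((hu_mem _).coeFn_toLp.mono fun _ hy _ => hy)]
      using hlim E hE hνE) hg.toL1
  rw [integral_congr_ae hg.coeFn_toL1] at htoLp
  simpa only [hpair] using htoLp

variable [l.IsCountablyGenerated] {A : ι → Set X}

theorem integrable_of_tendsto_setIntegral_aecover [l.NeBot] (hA : AECover μ l A)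
    (hμA : ∀ i, μ (A i) < ⊤) {f : Lp ℝ ⊤ μ} (hf : 0 ≤ f) {I : ℝ}
    (hI : Tendsto (fun i => ∫ x in A i, f x ∂μ) l (𝓝 I)) : Integrable f μ :=
  hA.integrable_of_integral_tendsto_of_nonneg_ae I
    (fun i => integrableOn_Lp_of_measure_ne_top f le_top (hμA i).ne) ((Lp.coeFn_nonneg f).2 hf) hI

variable [SigmaFinite μ] {T : Lp ℝ 1 μ →L[ℝ] Lp ℝ 1 ν}

theorem IsDoublyStochastic.tendsto_setIntegral (hT : IsDoublyStochastic T)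
    (hA : AECover μ l A) (hμA : ∀ i, μ (A i) < ⊤) {E : Set Y} (hE : MeasurableSet E)
    (hνE : ν E < ⊤) :
    Tendsto (fun i => ∫ y in E,
      T (indicatorConstLp 1 (hA.measurableSet i) (hμA i).ne (1 : ℝ)) y ∂ν) l (𝓝 (ν.real E)) := by
  have hχ : Integrable (indicatorConstLp ⊤ hE hνE.ne (1 : ℝ)) ν :=
    integrable_indicatorConstLp hE hνE.ne 1
  have hlim := hA.integral_tendsto_of_countably_generated (hT.integrable_linftyAdjoint hχ)
  rw [hT.integral_linftyAdjoint hχ, integral_indicatorConstLp, smul_eq_mul, mul_one] at hlim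
  simpa only [setIntegral_linftyAdjoint_indicatorConstLp (hA.measurableSet _) (hμA _).ne]
    using hlim

variable [l.NeBot]

theorem IsMarkovOperator.isSemiDoublyStochastic_of_tendsto (hT : IsMarkovOperator T)
    (hA : AECover μ l A) (hμA : ∀ i, μ (A i) < ⊤)
    (hlim : ∀ E, MeasurableSet E → ν E < ⊤ →
      Tendsto (fun i => ∫ y in E,
        T (indicatorConstLp 1 (hA.measurableSet i) (hμA i).ne (1 : ℝ)) y ∂ν) l (𝓝 (ν.real E))) :
    IsSemiDoublyStochastic T where
  toIsMarkovOperator := hT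
  setIntegral_indicatorConstLp_le {E B} hE hνE hB hμB := by
    set h := linftyAdjoint T (indicatorConstLp ⊤ hE hνE.ne (1 : ℝ))
    have hh : 0 ≤ h := linftyAdjoint_nonneg hT.nonneg _ (indicatorConstLp_one_nonneg hE hνE.ne)
    have hh_lim : Tendsto (fun i => ∫ x in A i, h x ∂μ) l (𝓝 (ν.real E)) := by
      simpa only [h, setIntegral_linftyAdjoint_indicatorConstLp (hA.measurableSet _) (hμA _).ne]
        using hlim E hE hνE
    have hh_int : Integrable h μ := integrable_of_tendsto_setIntegral_aecover hA hμA hh hh_lim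
    calc ∫ y in E, T (indicatorConstLp 1 hB hμB.ne (1 : ℝ)) y ∂ν = ∫ x in B, h x ∂μ :=
          (setIntegral_linftyAdjoint_indicatorConstLp hB hμB.ne hE hνE.ne).symm
      _ ≤ ∫ x, h x ∂μ := setIntegral_le_integral hh_int ((Lp.coeFn_nonneg h).2 hh)
      _ = ν.real E := hA.integral_eq_of_tendsto _ hh_int hh_lim

theorem IsSemiDoublyStochastic.isDoublyStochastic_of_tendsto (hT : IsSemiDoublyStochastic T)
    (hA : AECover μ l A) (hμA : ∀ i, μ (A i) < ⊤)
    (hlim : ∀ E, MeasurableSet E → ν E < ⊤ →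
      Tendsto (fun i => ∫ y in E,
        T (indicatorConstLp 1 (hA.measurableSet i) (hμA i).ne (1 : ℝ)) y ∂ν) l (𝓝 (ν.real E))) :
    IsDoublyStochastic T := by
  have hadj_lim {g : Lp ℝ ⊤ ν} (hg : Integrable g ν) :
      Tendsto (fun i => ∫ x in A i, linftyAdjoint T g x ∂μ) l (𝓝 (∫ y, g y ∂ν)) := by
    simp only [setIntegral_linftyAdjoint (hA.measurableSet _) (hμA _).ne]
    exact tendsto_l1LinftyPairing_of_ae_norm_le_one
      (fun i => hT.ae_norm_le_one (hA.measurableSet i) (hμA i)) hlim hg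
  have hadj_int {g : Lp ℝ ⊤ ν} (hg : Integrable g ν) : Integrable (linftyAdjoint T g) μ := by
    have habs : Integrable (linftyAdjoint T |g|) μ :=
      integrable_of_tendsto_setIntegral_aecover hA hμA
        (linftyAdjoint_nonneg hT.nonneg _ (abs_nonneg g))
        (hadj_lim (hg.abs.congr (Lp.coeFn_abs g).symm))
    exact habs.mono' (Lp.aestronglyMeasurable _) (ae_abs_linftyAdjoint_le hT.nonneg g)
  exact ⟨hT, hadj_int, fun hg => hA.integral_eq_of_tendsto _ (hadj_int hg) (hadj_lim hg)⟩

theorem isDoublyStochastic_iff_tendsto_setIntegral (hA : AECover μ l A)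
    (hμA : ∀ i, μ (A i) < ⊤) :
    IsDoublyStochastic T ↔ IsMarkovOperator T ∧
      ∀ E, MeasurableSet E → ν E < ⊤ →
        Tendsto (fun i => ∫ y in E,
          T (indicatorConstLp 1 (hA.measurableSet i) (hμA i).ne (1 : ℝ)) y ∂ν) l
          (𝓝 (ν.real E)) :=
  ⟨fun hT => ⟨hT.toIsMarkovOperator, fun _ => hT.tendsto_setIntegral hA hμA⟩,
    fun ⟨hT, hlim⟩ => (hT.isSemiDoublyStochastic_of_tendsto hA hμA hlim
      ).isDoublyStochastic_of_tendsto hA hμA hlim⟩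

end Cover

section Extension

variable {D : Lp.simpleFunc ℝ 1 μ →ₗ[ℝ] Lp ℝ 1 ν}

theorem simpleFunc_indicatorConst_eq_smul_one {s : Set X} (hs : MeasurableSet s) (hμs : μ s ≠ ⊤)
    (c : ℝ) :
    Lp.simpleFunc.indicatorConst p hs hμs c
      = c • Lp.simpleFunc.indicatorConst p hs hμs (1 : ℝ) := by
  apply Subtype.ext
  rw [Lp.simpleFunc.coe_smul, Lp.simpleFunc.coe_indicatorConst, Lp.simpleFunc.coe_indicatorConst,
    indicatorConstLp_eq_smul_one]

theorem exists_simpleFunc_coe_eq_abs (φ : Lp.simpleFunc ℝ p μ) :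
    ∃ ψ : Lp.simpleFunc ℝ p μ, (ψ : Lp ℝ p μ) = |(φ : Lp ℝ p μ)| := by
  have habs : MemLp ((Lp.simpleFunc.toSimpleFunc φ).map abs) p μ := by
    simpa using! (Lp.simpleFunc.memLp φ).abs
  refine ⟨SimpleFunc.toLp _ habs, Lp.ext ?_⟩
  rw [Lp.simpleFunc.toLp_eq_toLp]
  filter_upwards [habs.coeFn_toLp, Lp.simpleFunc.toSimpleFunc_eq_toFun φ,
    Lp.coeFn_abs (φ : Lp ℝ p μ)] with x hψ hφ hφ_abs
  rw [hψ, hφ_abs, ← hφ, SimpleFunc.map_apply]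

theorem integral_map_simpleFunc
    (hD : ∀ (E : Set X) (hE : MeasurableSet E) (hμE : μ E < ⊤),
      ∫ y, D (Lp.simpleFunc.indicatorConst 1 hE hμE.ne (1 : ℝ)) y ∂ν = μ.real E)
    (φ : Lp.simpleFunc ℝ 1 μ) : ∫ y, D φ y ∂ν = ∫ x, (φ : Lp ℝ 1 μ) x ∂μ := by
  rw [integral_L1_eq_integralCLM, integral_L1_eq_integralCLM]
  induction φ using Lp.simpleFunc.induction one_ne_zero ENNReal.one_ne_top with
  | indicatorConst c hs hμs =>
    rw [simpleFunc_indicatorConst_eq_smul_one, Lp.simpleFunc.coe_smul, map_smul, map_smul,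
      map_smul, ← integral_L1_eq_integralCLM, hD _ hs hμs, ← integral_L1_eq_integralCLM,
      Lp.simpleFunc.coe_indicatorConst, integral_indicatorConstLp, smul_eq_mul (μ.real _), mul_one]
  | add hf hg _ hf_int hg_int =>
    rw [map_add, map_add, hf_int, hg_int, AddSubgroup.coe_add, map_add]

theorem norm_map_simpleFunc_le (hD_nonneg : ∀ φ, 0 ≤ φ → 0 ≤ D φ)
    (hD_int : ∀ φ : Lp.simpleFunc ℝ 1 μ, ∫ y, D φ y ∂ν = ∫ x, (φ : Lp ℝ 1 μ) x ∂μ)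
    (φ : Lp.simpleFunc ℝ 1 μ) : ‖D φ‖ ≤ ‖(φ : Lp ℝ 1 μ)‖ := by
  obtain ⟨ψ, hψ⟩ := exists_simpleFunc_coe_eq_abs φ
  have hψ_nonneg : 0 ≤ ψ := by
    rw [← Subtype.coe_le_coe, hψ]
    exact abs_nonneg _
  have hle : |D φ| ≤ D ψ := by
    refine abs_map_le_of_le_of_neg_le hD_nonneg ?_ ?_ <;> rw [← Subtype.coe_le_coe, hψ]
    · exact le_abs_self _
    · exact neg_le_abs _
  calc ‖D φ‖ ≤ ‖D ψ‖ := norm_le_norm_of_abs_le_abs (hle.trans (le_abs_self _))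
    _ = ‖(ψ : Lp ℝ 1 μ)‖ := by
        rw [norm_L1_eq_integral_of_nonneg (hD_nonneg ψ hψ_nonneg), hD_int,
          norm_L1_eq_integral_of_nonneg hψ_nonneg]
    _ = ‖(φ : Lp ℝ 1 μ)‖ := by rw [hψ, norm_abs_eq_norm]

theorem exists_isMarkovOperator_extension_iff :
    (∃ T : Lp ℝ 1 μ →L[ℝ] Lp ℝ 1 ν, (∀ φ : Lp.simpleFunc ℝ 1 μ, T φ = D φ) ∧
      IsMarkovOperator T) ↔
      (∀ φ, 0 ≤ φ → 0 ≤ D φ) ∧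
      ∀ (E : Set X) (hE : MeasurableSet E) (hμE : μ E < ⊤),
        ∫ y, D (Lp.simpleFunc.indicatorConst 1 hE hμE.ne (1 : ℝ)) y ∂ν = μ.real E := by
  constructor
  · rintro ⟨T, hTD, hT⟩
    refine ⟨fun φ hφ => hTD φ ▸ hT.nonneg _ hφ, fun E hE hμE => ?_⟩
    rw [← hTD, hT.integral_eq, Lp.simpleFunc.coe_indicatorConst, integral_indicatorConstLp,
      smul_eq_mul, mul_one]
  · rintro ⟨hD_nonneg, hD⟩
    have hD_int := integral_map_simpleFunc hD
    let e := (Lp.simpleFunc.coeToLp X ℝ ℝ (p := 1) (μ := μ)).toLinearMap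
    have he : DenseRange e := Lp.simpleFunc.denseRange ENNReal.one_ne_top
    have hTD (φ : Lp.simpleFunc ℝ 1 μ) : D.extendOfNorm e φ = D φ :=
      LinearMap.extendOfNorm_eq he
        ⟨1, fun φ => (norm_map_simpleFunc_le hD_nonneg hD_int φ).trans_eq (one_mul _).symm⟩ φ
    refine ⟨D.extendOfNorm e, hTD, fun f hf => ?_, fun f => ?_⟩
    · refine (Lp.simpleFunc.denseRange_coeSimpleFuncNonnegToLpNonneg 1 μ ℝ
        ENNReal.one_ne_top).induction_on (p := fun f => 0 ≤ D.extendOfNorm e f.1) ⟨f, hf⟩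
        (isClosed_le continuous_const (by fun_prop)) fun φ => ?_
      exact (hTD φ.1).symm ▸ hD_nonneg φ.1 φ.2
    · rw [integral_L1_eq_integralCLM, integral_L1_eq_integralCLM]
      refine he.induction_on f (isClosed_eq (by fun_prop) (by fun_prop)) fun φ => ?_
      rw [← integral_L1_eq_integralCLM, ← integral_L1_eq_integralCLM]
      exact (congrArg (fun g : Lp ℝ 1 ν => ∫ y, g y ∂ν) (hTD φ)).trans (hD_int φ)

end Extension

theorem extension_to_doubly_stochastic_iff_general [SigmaFinite μ] {l : Filter ι} [l.NeBot]
    [l.IsCountablyGenerated] {A : ι → Set X} (hA : AECover μ l A) (hμA : ∀ i, μ (A i) < ⊤)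
    (D : Lp.simpleFunc ℝ 1 μ →ₗ[ℝ] Lp ℝ 1 ν) :
    (∃ T : Lp ℝ 1 μ →L[ℝ] Lp ℝ 1 ν, (∀ φ : Lp.simpleFunc ℝ 1 μ, T φ = D φ) ∧
      IsDoublyStochastic T) ↔
      (∀ φ, 0 ≤ φ → 0 ≤ D φ) ∧
      (∀ (E : Set X) (hE : MeasurableSet E) (hμE : μ E < ⊤),
        ∫ y, D (Lp.simpleFunc.indicatorConst 1 hE hμE.ne (1 : ℝ)) y ∂ν = μ.real E) ∧
      ∀ E, MeasurableSet E → ν E < ⊤ →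
        Tendsto (fun i => ∫ y in E,
          D (Lp.simpleFunc.indicatorConst 1 (hA.measurableSet i) (hμA i).ne (1 : ℝ)) y ∂ν) l
          (𝓝 (ν.real E)) := by
  rw [← and_assoc, ← exists_isMarkovOperator_extension_iff, ← exists_and_right]
  refine exists_congr fun T => ?_
  rw [and_assoc]
  refine and_congr_right fun hTD => ?_
  simp only [isDoublyStochastic_iff_tendsto_setIntegral hA hμA, ← hTD,
    Lp.simpleFunc.coe_indicatorConst]

end Operators

/-- **Construction of doubly stochastic operators.**  Let `(X,μ)` be σ-finite, exhausted by an
increasing sequence `Aₙ` of sets of finite measure, and let `D` be a linear map from the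
subspace `𝒮` of integrable simple functions into `L¹(X,μ)`.  Then `D` extends to a doubly
stochastic operator on `L¹(X,μ)` (a positive, integral-preserving operator `T` which is
semi-doubly stochastic and whose adjoint `T' : L^∞ → L^∞` preserves the integral of every
`g ∈ L¹ ∩ L^∞`) if and only if `D` is nonnegative, `∫ D χ_E dμ = μ(E)` for every set `E` of
finite measure, and `∫ χ_E · D χ_{Aₙ} dμ → μ(E)` as `n → ∞` for every such `E`. -/
theorem extension_to_doubly_stochastic_iff
    {X : Type*} [MeasurableSpace X] (μ : Measure X) [SigmaFinite μ]
    (A : ℕ → Set X) (hAmeas : ∀ n, MeasurableSet (A n)) (hAfin : ∀ n, μ (A n) < ⊤)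
    (hAmono : Monotone A) (hAcover : ⋃ n, A n = Set.univ)
    (D : Lp.simpleFunc ℝ 1 μ →ₗ[ℝ] Lp ℝ 1 μ) :
    (∃ T : Lp ℝ 1 μ →L[ℝ] Lp ℝ 1 μ,
      (∀ φ : Lp.simpleFunc ℝ 1 μ, T ↑φ = D φ) ∧
      (∀ f : Lp ℝ 1 μ, 0 ≤ᵐ[μ] (f : X → ℝ) → 0 ≤ᵐ[μ] (T f : X → ℝ)) ∧
      (∀ f : Lp ℝ 1 μ, ∫ x, (T f : X → ℝ) x ∂μ = ∫ x, (f : X → ℝ) x ∂μ) ∧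
      (∀ E B : Set X, ∀ (_ : MeasurableSet E) (_ : μ E < ⊤) (hB : MeasurableSet B)
        (hBfin : μ B < ⊤),
        ∫ x in E, (T (indicatorConstLp 1 hB hBfin.ne (1 : ℝ)) : X → ℝ) x ∂μ ≤ (μ E).toReal) ∧
      (∃ T' : Lp ℝ ⊤ μ →L[ℝ] Lp ℝ ⊤ μ,
        (∀ (f : Lp ℝ 1 μ) (g : Lp ℝ ⊤ μ),
          ∫ x, (T f : X → ℝ) x * (g : X → ℝ) x ∂μ
            = ∫ x, (f : X → ℝ) x * (T' g : X → ℝ) x ∂μ) ∧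
        (∀ g : Lp ℝ ⊤ μ, Integrable (g : X → ℝ) μ →
          Integrable (T' g : X → ℝ) μ ∧
          ∫ x, (T' g : X → ℝ) x ∂μ = ∫ x, (g : X → ℝ) x ∂μ)))
    ↔
    ((∀ φ : Lp.simpleFunc ℝ 1 μ,
        0 ≤ᵐ[μ] ((φ : Lp ℝ 1 μ) : X → ℝ) → 0 ≤ᵐ[μ] (D φ : X → ℝ)) ∧
     (∀ E : Set X, ∀ (hE : MeasurableSet E) (hEfin : μ E < ⊤),
        ∫ x, (D (Lp.simpleFunc.indicatorConst 1 hE hEfin.ne (1 : ℝ)) : X → ℝ) x ∂μ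
          = (μ E).toReal) ∧
     (∀ E : Set X, MeasurableSet E → μ E < ⊤ →
        Tendsto
          (fun n => ∫ x in E,
            (D (Lp.simpleFunc.indicatorConst 1 (hAmeas n) (hAfin n).ne (1 : ℝ)) : X → ℝ) x ∂μ)
          atTop (𝓝 (μ E).toReal))) := by
  simp only [← isDoublyStochastic_iff]
  simp only [Lp.coeFn_nonneg]
  exact extension_to_doubly_stochastic_iff_general
    (aecover_atTop_of_monotone hAmeas hAmono hAcover) hAfin D
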